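/- Let n ≥ 4, r = 2, and τ_2 := (s_{⌈(n−1)/2⌉}·s_{⌈(n−1)/2⌉−1}⋯s_1)·(s_{n−1}·s_{n−2}⋯s_2) ∈ W^{I_2}. Then for w ∈ W^{I_2}: τ_2 ≤ w if and only if w = (s_m·s_{m−1}⋯s_1)·(s_{n−1}·s_{n−2}⋯s_2) for some integer m with ⌈(n−1)/2⌉ ≤ m ≤ n−2. -/

import Mathlib

/-!  Setting: `W = S_N`, the symmetric group of `{1, …, N}`, acting on `ℝ^N` by
permuting coordinates (`w · e_i = e_{w(i)}`).  Vectors, roots and indices are written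
1-based: `stdE N j` is the standard basis vector `e_j` (for `1 ≤ j ≤ N`),
`sroot N i = α_i = e_i − e_{i+1}` is the `i`-th simple root (for `1 ≤ i ≤ N−1`), and
`sTrans N i = s_i` is the adjacent transposition `(i, i+1)`. -/

namespace SnPaper

/-- The standard basis vector `e_j` of `ℝ^N` (1-based; junk value `0` out of range). -/
noncomputable def stdE (N j : ℕ) : Fin N → ℝ :=
  if h : 1 ≤ j ∧ j ≤ N then Pi.single (⟨j - 1, by omega⟩ : Fin N) 1 else 0

/-- The simple root `α_i = e_i − e_{i+1}`. -/
noncomputable def sroot (N i : ℕ) : Fin N → ℝ := stdE N i - stdE N (i + 1)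

/-- The adjacent transposition `s_i = (i, i+1)` (1-based; junk value `1` out of range). -/
def sTrans (N i : ℕ) : Equiv.Perm (Fin N) :=
  if h : 1 ≤ i ∧ i + 1 ≤ N then
    Equiv.swap (⟨i - 1, by omega⟩ : Fin N) (⟨i, by omega⟩ : Fin N)
  else 1

/-- The action of `w ∈ S_N` on `ℝ^N` permuting coordinates: `w · e_i = e_{w(i)}`. -/
def permAct (N : ℕ) (w : Equiv.Perm (Fin N)) (v : Fin N → ℝ) : Fin N → ℝ := v ∘ w.symm

/-- `v` is a combination of the simple roots `α_1, …, α_{N−1}` with all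
coefficients `≥ 0`. -/
def IsNonnegComb (N : ℕ) (v : Fin N → ℝ) : Prop :=
  ∃ c : ℕ → ℝ, (∀ i, 0 ≤ c i) ∧ v = ∑ i ∈ Finset.Icc 1 (N - 1), c i • sroot N i

/-- `v > 0`: a nonzero nonnegative combination of the simple roots. -/
def IsPos (N : ℕ) (v : Fin N → ℝ) : Prop := IsNonnegComb N v ∧ v ≠ 0

/-- `x ≤ y` for vectors: `y − x` is a nonnegative combination of the simple roots. -/
def vle (N : ℕ) (x y : Fin N → ℝ) : Prop := IsNonnegComb N (y - x)

/-- The Coxeter length `ℓ(w)`: the least `k` such that `w` is a product of `k` adjacent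
transpositions `s_i`, `1 ≤ i ≤ N−1`. -/
noncomputable def len (N : ℕ) (w : Equiv.Perm (Fin N)) : ℕ :=
  sInf {k | ∃ L : List ℕ, (∀ i ∈ L, 1 ≤ i ∧ i ≤ N - 1) ∧ L.length = k ∧
    (L.map (sTrans N)).prod = w}

/-- `w ≤ τ` in `W`:  `ℓ(τ) = ℓ(w) + ℓ(τ w⁻¹)`. -/
def wle (N : ℕ) (w τ : Equiv.Perm (Fin N)) : Prop :=
  len N τ = len N w + len N (τ * w⁻¹)

/-- `W^{I_r} = {w ∈ W : w(α_j) > 0 for all j ≠ r}`. -/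
def WIr (N r : ℕ) : Set (Equiv.Perm (Fin N)) :=
  {w | ∀ j, 1 ≤ j → j ≤ N - 1 → j ≠ r → IsPos N (permAct N w (sroot N j))}

/-- The block `s_a · s_{a−1} ⋯ s_j` of consecutive simple reflections. -/
def block (N j a : ℕ) : Equiv.Perm (Fin N) :=
  ((List.range' j (a + 1 - j)).reverse.map (sTrans N)).prod

/-- The canonical form `(s_{a_i} ⋯ s_i) · (s_{a_{i+1}} ⋯ s_{i+1}) ⋯ (s_{a_r} ⋯ s_r)`. -/
def canonForm (N i r : ℕ) (a : ℕ → ℕ) : Equiv.Perm (Fin N) :=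
  ((List.range' i (r + 1 - i)).map fun j => block N j (a j)).prod

/-- The fundamental weight `ω_r = e_1 + ⋯ + e_r − (r/N)(e_1 + ⋯ + e_N)`. -/
noncomputable def fundWeight (N r : ℕ) : Fin N → ℝ :=
  (∑ i ∈ Finset.Icc 1 r, stdE N i) - ((r : ℝ) / (N : ℝ)) • ∑ i ∈ Finset.Icc 1 N, stdE N i

end SnPaper

namespace SnPaper

/-!
A simple reflection raises at most one point, and by one, so `∑ x ∈ S, w x ≤ ∑ x ∈ S, x + ℓ(w)` for
every set `S`. Conversely, if `v, w ∈ W^{I_r}` and `v ≤ w` on the first `r` points, then `v` can be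
raised to `w` through `W^{I_r}` one unit at a time by left multiplication with simple reflections.
Hence `ℓ(w v⁻¹) = ∑ x < r, (w x - v x)`, in particular `ℓ(w) = ∑ x < r, (w x - x)`, and the order
`≤` on `W^{I_r}` is the pointwise order of the first `r` values. For `r = 2` the elements of
`W^{I_2}` are the products `(s_a ⋯ s_1)(s_b ⋯ s_2)` with `a < b`, whose first two values are `a`
and `b` when points are numbered from `0`.
-/

variable {N : ℕ}

theorem sTrans_apply {i : ℕ} (hi : 1 ≤ i) (hiN : i < N) (x : Fin N) :
    (sTrans N i x : ℕ) = if (x : ℕ) = i - 1 then i else if (x : ℕ) = i then i - 1 else x := by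
  rw [sTrans, dif_pos ⟨hi, hiN⟩, Equiv.swap_apply_def]
  simp only [Fin.ext_iff]
  split_ifs <;> rfl

theorem strictMonoOn_sTrans_ne_pred {i : ℕ} (hi : 1 ≤ i) (hiN : i < N) :
    StrictMonoOn (sTrans N i) {x | (x : ℕ) ≠ i - 1} := by
  intro x hx y hy hxy
  simp only [Set.mem_ofPred_eq] at hx hy
  rw [Fin.lt_def] at hxy ⊢
  rw [sTrans_apply hi hiN, sTrans_apply hi hiN]
  split_ifs <;> omega

theorem strictMonoOn_sTrans_ne {i : ℕ} (hi : 1 ≤ i) (hiN : i < N) :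
    StrictMonoOn (sTrans N i) {x | (x : ℕ) ≠ i} := by
  intro x hx y hy hxy
  simp only [Set.mem_ofPred_eq] at hx hy
  rw [Fin.lt_def] at hxy ⊢
  rw [sTrans_apply hi hiN, sTrans_apply hi hiN]
  split_ifs <;> omega

theorem exists_prod_map_sTrans_eq (w : Equiv.Perm (Fin N)) :
    ∃ L : List ℕ, (∀ i ∈ L, 1 ≤ i ∧ i ≤ N - 1) ∧ (L.map (sTrans N)).prod = w := by
  cases N with
  | zero => exact ⟨[], by simp, Subsingleton.elim _ _⟩
  | succ N =>
    have hw : w ∈ Submonoid.closure (Set.range fun i : Fin N => Equiv.swap i.castSucc i.succ) := by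
      simp only [Equiv.Perm.mclosure_swap_castSucc_succ, Submonoid.mem_top]
    induction hw using Submonoid.closure_induction with
    | mem w hw =>
      obtain ⟨i, rfl⟩ := hw
      refine ⟨[(i : ℕ) + 1], by simp, ?_⟩
      simp [sTrans, Fin.castSucc, Fin.castAdd, Fin.castLE, Fin.succ]
    | one => exact ⟨[], by simp, rfl⟩
    | mul v w _ _ hv hw =>
      obtain ⟨L, hL, rfl⟩ := hv
      obtain ⟨M, hM, rfl⟩ := hw
      exact ⟨L ++ M, List.forall_mem_append.2 ⟨hL, hM⟩, by simp⟩

theorem len_prod_map_sTrans_le {L : List ℕ} (hL : ∀ i ∈ L, 1 ≤ i ∧ i ≤ N - 1) :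
    len N (L.map (sTrans N)).prod ≤ L.length :=
  Nat.sInf_le ⟨L, hL, rfl, rfl⟩

theorem exists_length_eq_len (w : Equiv.Perm (Fin N)) :
    ∃ L : List ℕ, (∀ i ∈ L, 1 ≤ i ∧ i ≤ N - 1) ∧ L.length = len N w ∧
      (L.map (sTrans N)).prod = w := by
  obtain ⟨L, hL, hLw⟩ := exists_prod_map_sTrans_eq w
  exact Nat.sInf_mem (s := {k | ∃ L : List ℕ, (∀ i ∈ L, 1 ≤ i ∧ i ≤ N - 1) ∧ L.length = k ∧
    (L.map (sTrans N)).prod = w}) ⟨L.length, L, hL, rfl, hLw⟩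

theorem len_one : len N 1 = 0 :=
  Nat.le_zero.1 (len_prod_map_sTrans_le (L := []) (by simp))

theorem len_mul_sTrans_le (w : Equiv.Perm (Fin N)) {i : ℕ} (hi : 1 ≤ i) (hiN : i < N) :
    len N (w * sTrans N i) ≤ len N w + 1 := by
  obtain ⟨L, hL, hlen, hLw⟩ := exists_length_eq_len w
  have h := len_prod_map_sTrans_le (N := N) (L := L ++ [i])
    (List.forall_mem_append.2 ⟨hL, by simp; omega⟩)
  simpa [hLw, hlen] using h

theorem sum_sTrans_le {i : ℕ} (hi : 1 ≤ i) (hiN : i < N) (S : Finset (Fin N)) :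
    ∑ x ∈ S, (sTrans N i x : ℕ) ≤ ∑ x ∈ S, (x : ℕ) + 1 := by
  have hpt (x : Fin N) : (sTrans N i x : ℕ) ≤ x + if x = ⟨i - 1, by omega⟩ then 1 else 0 := by
    rw [sTrans_apply hi hiN]
    simp only [Fin.ext_iff]
    split_ifs <;> omega
  calc ∑ x ∈ S, (sTrans N i x : ℕ)
      ≤ ∑ x ∈ S, ((x : ℕ) + if x = ⟨i - 1, by omega⟩ then 1 else 0) :=
        Finset.sum_le_sum fun x _ => hpt x
    _ ≤ ∑ x ∈ S, (x : ℕ) + 1 := by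
        rw [Finset.sum_add_distrib, Finset.sum_ite_eq']
        split_ifs <;> omega

theorem sum_apply_le_sum_add_len (w : Equiv.Perm (Fin N)) (S : Finset (Fin N)) :
    ∑ x ∈ S, (w x : ℕ) ≤ ∑ x ∈ S, (x : ℕ) + len N w := by
  obtain ⟨L, hL, hlen, rfl⟩ := exists_length_eq_len w
  rw [← hlen]
  clear hlen
  induction L with
  | nil => simp
  | cons i L ih =>
    obtain ⟨hi, hL⟩ := List.forall_mem_cons.1 hL
    have hstep := sum_sTrans_le (N := N) hi.1 (by omega)
      (S.map (L.map (sTrans N)).prod.toEmbedding)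
    simp only [Finset.sum_map, Equiv.coe_toEmbedding] at hstep
    simp only [List.map_cons, List.prod_cons, Equiv.Perm.mul_apply, List.length_cons]
    linarith [ih hL]

theorem sum_apply_le_sum_apply_add_len (v w : Equiv.Perm (Fin N)) (S : Finset (Fin N)) :
    ∑ x ∈ S, (w x : ℕ) ≤ ∑ x ∈ S, (v x : ℕ) + len N (w * v⁻¹) := by
  simpa using sum_apply_le_sum_add_len (w * v⁻¹) (S.map v.toEmbedding)

theorem perm_eq_of_eqOn_of_strictMonoOn_compl {α : Type*} [LinearOrder α] [WellFoundedLT α]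
    {s : Set α} {v w : Equiv.Perm α} (h : Set.EqOn v w s) (hv : StrictMonoOn v sᶜ)
    (hw : StrictMonoOn w sᶜ) : v = w := by
  have hrange : Set.range (sᶜ.domRestrict v) = Set.range (sᶜ.domRestrict w) := by
    rw [Set.range_domRestrict, Set.range_domRestrict, Set.image_compl_eq v.bijective,
      Set.image_compl_eq w.bijective, h.image_eq]
  have hcompl : sᶜ.domRestrict v = sᶜ.domRestrict w :=
    (hv.strictMono.range_inj hw.strictMono).1 hrange
  ext x
  by_cases hx : x ∈ s
  · exact h hx
  · exact congrFun hcompl ⟨x, hx⟩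

/-- Grassmannian permutations with descent at most at `r`: increasing on the first `r` and on
the last `N - r` points. These are the elements of `W^{I_r}`; points are indexed from `0`, so the
first `r` points are those `x : Fin N` with `x < r`. -/
structure IsGrassmannian (r : ℕ) (w : Equiv.Perm (Fin N)) : Prop where
  strictMonoOn_lt : StrictMonoOn w {x | (x : ℕ) < r}
  strictMonoOn_ge : StrictMonoOn w {x | r ≤ (x : ℕ)}

namespace IsGrassmannian

variable {r : ℕ} {v w : Equiv.Perm (Fin N)}

theorem one : IsGrassmannian r (1 : Equiv.Perm (Fin N)) :=
  ⟨strictMonoOn_id, strictMonoOn_id⟩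

theorem eq_of_eqOn (hv : IsGrassmannian r v) (hw : IsGrassmannian r w)
    (h : Set.EqOn v w {x | (x : ℕ) < r}) : v = w := by
  have hcompl : {x : Fin N | (x : ℕ) < r}ᶜ = {x : Fin N | r ≤ (x : ℕ)} := by ext; simp
  exact perm_eq_of_eqOn_of_strictMonoOn_compl h (hcompl ▸ hv.strictMonoOn_ge)
    (hcompl ▸ hw.strictMonoOn_ge)

theorem le_apply (hw : IsGrassmannian r w) {x : Fin N} (hx : (x : ℕ) < r) : x ≤ w x := by
  obtain ⟨k, hk⟩ := x
  induction k with
  | zero => exact Nat.zero_le _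
  | succ k ih =>
    have hlt : w ⟨k, by omega⟩ < w ⟨k + 1, hk⟩ :=
      hw.strictMonoOn_lt (Nat.lt_of_succ_lt hx) hx (Nat.lt_succ_self k)
    exact Nat.succ_le_of_lt ((ih (by omega) (Nat.lt_of_succ_lt hx)).trans_lt hlt)

theorem sTrans_mul (hv : IsGrassmannian r v) {x : Fin N} (hx : (x : ℕ) < r)
    (hxN : (v x : ℕ) + 1 < N) (hgap : ∀ y : Fin N, (y : ℕ) < r → (v y : ℕ) ≠ v x + 1) :
    IsGrassmannian r (sTrans N (v x + 1) * v) where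
  strictMonoOn_lt := (strictMonoOn_sTrans_ne (by omega) hxN).comp hv.strictMonoOn_lt hgap
  strictMonoOn_ge := (strictMonoOn_sTrans_ne_pred (by omega) hxN).comp hv.strictMonoOn_ge
    fun y hy hyx => by
      have hyx' : y = x := v.injective (Fin.ext hyx)
      simp only [Set.mem_ofPred_eq] at hy
      omega

theorem exists_sTrans_mul_le (hv : IsGrassmannian r v) (hw : IsGrassmannian r w)
    (hle : ∀ x : Fin N, (x : ℕ) < r → v x ≤ w x) (hne : v ≠ w) :
    ∃ i, 1 ≤ i ∧ i < N ∧ IsGrassmannian r (sTrans N i * v) ∧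
      (∀ x : Fin N, (x : ℕ) < r → (sTrans N i * v) x ≤ w x) ∧
      ∑ x : Fin N with x.val < r, (v x : ℕ) <
        ∑ x : Fin N with x.val < r, ((sTrans N i * v) x : ℕ) := by
  obtain ⟨x, ⟨hxr, hxlt⟩, hmax⟩ :
      ∃ x, Maximal (fun x : Fin N => (x : ℕ) < r ∧ (v x : ℕ) < w x) x := by
    refine (Set.toFinite {x : Fin N | (x : ℕ) < r ∧ (v x : ℕ) < w x}).exists_maximal ?_
    by_contra! hempty
    refine hne (hv.eq_of_eqOn hw fun x hx => le_antisymm (hle x hx) (not_lt.1 fun hlt => ?_))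
    exact Set.eq_empty_iff_forall_notMem.1 hempty x ⟨hx, hlt⟩
  have hxN : (v x : ℕ) + 1 < N := by omega
  -- `v y = v x + 1` would force `x < y`, hence `v y = w y > w x ≥ v x + 1` by maximality of `x`.
  have hgap (y : Fin N) (hy : (y : ℕ) < r) : (v y : ℕ) ≠ v x + 1 := by
    intro hyx
    have hxy : x < y := (hv.strictMonoOn_lt.lt_iff_lt hxr hy).1 (Fin.lt_def.2 (by omega))
    have hwxy : w x < w y := hw.strictMonoOn_lt hxr hy hxy
    exact hxy.not_ge (hmax ⟨hy, by rw [Fin.lt_def] at hwxy; omega⟩ hxy.le)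
  have happly (y : Fin N) (hy : (y : ℕ) < r) :
      ((sTrans N (v x + 1) * v) y : ℕ) = if y = x then (v x : ℕ) + 1 else v y := by
    rw [Equiv.Perm.mul_apply, sTrans_apply (by omega) hxN, if_neg (hgap y hy)]
    simp only [Nat.add_sub_cancel, Fin.val_inj, v.apply_eq_iff_eq]
  refine ⟨v x + 1, by omega, hxN, hv.sTrans_mul hxr hxN hgap, fun y hy => ?_, ?_⟩
  · rw [Fin.le_def, happly y hy]
    split_ifs with hyx
    · exact hyx ▸ hxlt
    · exact hle y hy
  · refine Finset.sum_lt_sum (fun y hy => ?_) ⟨x, by simpa using hxr, ?_⟩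
    · rw [happly y (by simpa using hy)]
      split_ifs with hyx <;> simp [hyx]
    · rw [happly x hxr, if_pos rfl]
      exact Nat.lt_succ_self _

theorem sum_add_len_le (hv : IsGrassmannian r v) (hw : IsGrassmannian r w)
    (hle : ∀ x : Fin N, (x : ℕ) < r → v x ≤ w x) :
    ∑ x : Fin N with x.val < r, (v x : ℕ) + len N (w * v⁻¹) ≤
      ∑ x : Fin N with x.val < r, (w x : ℕ) := by
  induction hk : ∑ x : Fin N with x.val < r, (w x : ℕ) - ∑ x : Fin N with x.val < r, (v x : ℕ)
    using Nat.strong_induction_on generalizing v with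
  | _ k ih =>
    by_cases hvw : v = w
    · simp [hvw, len_one]
    · obtain ⟨i, hi, hiN, hv', hle', hlt⟩ := hv.exists_sTrans_mul_le hw hle hvw
      have hsum : ∑ x : Fin N with x.val < r, ((sTrans N i * v) x : ℕ) ≤
          ∑ x : Fin N with x.val < r, (w x : ℕ) :=
        Finset.sum_le_sum fun x hx => hle' x (Finset.mem_filter.1 hx).2
      have hlen' := ih _ (by omega) hv' hle' rfl
      have hlen := len_mul_sTrans_le (w * (sTrans N i * v)⁻¹) hi hiN
      have hword : w * (sTrans N i * v)⁻¹ * sTrans N i = w * v⁻¹ := by group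
      rw [hword] at hlen
      omega

theorem sum_eq_sum_add_len (hv : IsGrassmannian r v) (hw : IsGrassmannian r w)
    (hle : ∀ x : Fin N, (x : ℕ) < r → v x ≤ w x) :
    ∑ x : Fin N with x.val < r, (w x : ℕ) =
      ∑ x : Fin N with x.val < r, (v x : ℕ) + len N (w * v⁻¹) :=
  le_antisymm (sum_apply_le_sum_apply_add_len v w _) (hv.sum_add_len_le hw hle)

theorem sum_eq_sum_id_add_len (hw : IsGrassmannian r w) :
    ∑ x : Fin N with x.val < r, (w x : ℕ) =
      ∑ x : Fin N with x.val < r, (x : ℕ) + len N w := by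
  simpa using one.sum_eq_sum_add_len hw fun x => hw.le_apply

theorem wle_iff (hv : IsGrassmannian r v) (hw : IsGrassmannian r w) :
    wle N v w ↔ ∀ x : Fin N, (x : ℕ) < r → v x ≤ w x := by
  have hlenv := hv.sum_eq_sum_id_add_len
  have hlenw := hw.sum_eq_sum_id_add_len
  unfold wle
  constructor
  · -- `h` turns the bound of `sum_apply_le_sum_apply_add_len` on all `r` initial points into an
    -- equality; subtracting the bound on all of them but `x` leaves `v x ≤ w x`.
    intro h x hx
    have hmem : x ∈ ({x : Fin N | (x : ℕ) < r} : Finset (Fin N)) := by simpa using hx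
    have hbound := sum_apply_le_sum_apply_add_len v w
      (({x : Fin N | (x : ℕ) < r} : Finset (Fin N)).erase x)
    have hsumv := Finset.sum_erase_add _ (fun y => (v y : ℕ)) hmem
    have hsumw := Finset.sum_erase_add _ (fun y => (w y : ℕ)) hmem
    rw [Fin.le_def]
    omega
  · intro hle
    have hlen := hv.sum_eq_sum_add_len hw hle
    omega

end IsGrassmannian

theorem block_succ_self {a : ℕ} : block N (a + 1) a = 1 := by simp [block]

theorem block_succ {j a : ℕ} (hj : j ≤ a + 1) :
    block N j (a + 1) = sTrans N (a + 1) * block N j a := by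
  obtain ⟨k, hk⟩ := Nat.exists_eq_add_of_le hj
  simp [block, hk, show j + k + 1 - j = k + 1 by omega, List.range'_concat]

theorem block_apply {j a : ℕ} (hja : j ≤ a) (haN : a < N) (x : Fin N) :
    (block N (j + 1) a x : ℕ) =
      if (x : ℕ) = j then a else if j < (x : ℕ) ∧ (x : ℕ) ≤ a then (x : ℕ) - 1 else x := by
  induction a, hja using Nat.le_induction with
  | base =>
    rw [block_succ_self, Equiv.Perm.one_apply]
    split_ifs <;> omega
  | succ a hja ih =>
    rw [block_succ (by omega), Equiv.Perm.mul_apply, sTrans_apply (by omega) haN, ih (by omega)]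
    split_ifs <;> omega

theorem block_mul_block_apply {a b : ℕ} (hab : a < b) (hbN : b < N) (x : Fin N) :
    ((block N 1 a * block N 2 b) x : ℕ) =
      if (x : ℕ) = 0 then a else if (x : ℕ) = 1 then b else
      if (x : ℕ) ≤ a + 1 then x - 2 else if (x : ℕ) ≤ b then x - 1 else x := by
  rw [Equiv.Perm.mul_apply, block_apply (Nat.zero_le a) (by omega), block_apply (by omega) hbN]
  split_ifs <;> omega

theorem isGrassmannian_block_mul_block {a b : ℕ} (hab : a < b) (hbN : b < N) :
    IsGrassmannian 2 (block N 1 a * block N 2 b) := by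
  constructor <;>
  · intro x hx y hy hxy
    simp only [Set.mem_ofPred_eq] at hx hy
    rw [Fin.lt_def] at hxy ⊢
    rw [block_mul_block_apply hab hbN, block_mul_block_apply hab hbN]
    split_ifs <;> omega

theorem IsGrassmannian.exists_eq_block_mul_block {w : Equiv.Perm (Fin N)}
    (hw : IsGrassmannian 2 w) (hN : 1 < N) :
    ∃ a b, a < b ∧ b < N ∧ w = block N 1 a * block N 2 b := by
  have hlt : w ⟨0, Nat.zero_lt_of_lt hN⟩ < w ⟨1, hN⟩ :=
    hw.strictMonoOn_lt Nat.zero_lt_two Nat.one_lt_two Nat.zero_lt_one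
  refine ⟨w ⟨0, _⟩, w ⟨1, hN⟩, hlt, (w ⟨1, hN⟩).2, ?_⟩
  refine hw.eq_of_eqOn (isGrassmannian_block_mul_block hlt (w ⟨1, hN⟩).2) fun x hx => ?_
  rw [Fin.ext_iff, block_mul_block_apply hlt (w ⟨1, hN⟩).2]
  obtain ⟨_ | _ | k, hk⟩ := x
  · rfl
  · rfl
  · exact absurd hx (by simp)

section DotProduct

open scoped Matrix

theorem dotProduct_stdE (f : Fin N → ℝ) {j : ℕ} (hj : 1 ≤ j ∧ j ≤ N) :
    f ⬝ᵥ stdE N j = f ⟨j - 1, by omega⟩ := by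
  rw [stdE, dif_pos hj, dotProduct_single_one]

theorem dotProduct_sroot (f : Fin N → ℝ) {j : ℕ} (hj : 1 ≤ j) (hjN : j < N) :
    f ⬝ᵥ sroot N j = f ⟨j - 1, by omega⟩ - f ⟨j, hjN⟩ := by
  rw [sroot, dotProduct_sub, dotProduct_stdE f (by omega), dotProduct_stdE f (by omega)]
  rfl

theorem dotProduct_permAct (f : Fin N → ℝ) (w : Equiv.Perm (Fin N)) (v : Fin N → ℝ) :
    f ⬝ᵥ permAct N w v = (f ∘ w) ⬝ᵥ v :=
  dotProduct_comp_equiv_symm f v w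

theorem IsNonnegComb.dotProduct_nonpos {v f : Fin N → ℝ} (hv : IsNonnegComb N v)
    (hf : Monotone f) : f ⬝ᵥ v ≤ 0 := by
  obtain ⟨c, hc, rfl⟩ := hv
  rw [dotProduct_sum]
  refine Finset.sum_nonpos fun i hi => ?_
  rw [Finset.mem_Icc] at hi
  rw [dotProduct_smul, dotProduct_sroot f hi.1 (by omega)]
  exact smul_nonpos_of_nonneg_of_nonpos (hc i)
    (sub_nonpos.2 (hf (Fin.le_def.2 (Nat.sub_le i 1))))

end DotProduct

theorem apply_lt_apply_of_isNonnegComb {w : Equiv.Perm (Fin N)} {j : ℕ} (hj : 1 ≤ j) (hjN : j < N)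
    (h : IsNonnegComb N (permAct N w (sroot N j))) : w ⟨j - 1, by omega⟩ < w ⟨j, hjN⟩ := by
  have hmono : Monotone fun x : Fin N => (x : ℝ) := fun x y hxy => Nat.cast_le.2 hxy
  have hnonpos := h.dotProduct_nonpos hmono
  rw [dotProduct_permAct, dotProduct_sroot _ hj hjN, sub_nonpos] at hnonpos
  refine lt_of_le_of_ne (Nat.cast_le.1 hnonpos) fun heq => ?_
  have hval : j - 1 = j := Fin.mk.inj_iff.1 (w.injective heq)
  omega

theorem isGrassmannian_of_mem_WIr {r : ℕ} {w : Equiv.Perm (Fin N)} (hw : w ∈ WIr N r) :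
    IsGrassmannian r w := by
  have hsucc (x y : Fin N) (hxy : x ⋖ y) (hyr : (y : ℕ) ≠ r) : w x < w y := by
    have hval : (x : ℕ) + 1 = y := Nat.covBy_iff_add_one_eq.1 (Fin.covBy_iff.1 hxy)
    convert apply_lt_apply_of_isNonnegComb (by omega) y.2 (hw y (by omega) (by omega) hyr).1
    omega
  constructor
  · refine strictMonoOn_of_lt_succ ⟨fun x _ y hy z hz => lt_of_le_of_lt (α := ℕ) hz.2 hy⟩
      fun x hx _ hr => ?_
    exact hsucc _ _ (Order.covBy_succ_of_not_isMax hx) (ne_of_lt hr)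
  · refine strictMonoOn_of_lt_succ ⟨fun x hx y _ z hz => le_trans (α := ℕ) hx hz.1⟩
      fun x hx hr _ => ?_
    have hcov := Order.covBy_succ_of_not_isMax hx
    exact hsucc _ _ hcov (lt_of_le_of_lt (α := ℕ) hr hcov.lt).ne'

theorem wle_block_mul_block_iff {a b c d : ℕ} (hcd : c < d) (hdN : d < N) (hab : a < b)
    (hbN : b < N) :
    wle N (block N 1 c * block N 2 d) (block N 1 a * block N 2 b) ↔ c ≤ a ∧ d ≤ b := by
  rw [(isGrassmannian_block_mul_block hcd hdN).wle_iff (isGrassmannian_block_mul_block hab hbN)]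
  simp only [Fin.le_def, block_mul_block_apply hcd hdN, block_mul_block_apply hab hbN]
  constructor
  · intro h
    exact ⟨by simpa using h ⟨0, by omega⟩ (by simp), by simpa using h ⟨1, by omega⟩ (by simp)⟩
  · rintro ⟨hca, hdb⟩ x hx
    split_ifs <;> omega

theorem ceil_sub_one_div_two_lt {n : ℕ} (hn : 3 ≤ n) : ⌈((n : ℚ) - 1) / 2⌉ < (n : ℤ) - 1 := by
  have hn' : (3 : ℚ) ≤ n := by exact_mod_cast hn
  have hceil : ⌈((n : ℚ) - 1) / 2⌉ ≤ (n : ℤ) - 2 := Int.ceil_le.2 (by push_cast; linarith)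
  omega

theorem stmt19_general {n c : ℕ} (hc : c < n - 1) {w : Equiv.Perm (Fin n)} (hw : w ∈ WIr n 2) :
    wle n (block n 1 c * block n 2 (n - 1)) w ↔
      ∃ m : ℕ, c ≤ m ∧ m ≤ n - 2 ∧ w = block n 1 m * block n 2 (n - 1) := by
  constructor
  · intro hle
    obtain ⟨a, b, hab, hbn, rfl⟩ :=
      (isGrassmannian_of_mem_WIr hw).exists_eq_block_mul_block (by omega)
    obtain ⟨hca, hnb⟩ := (wle_block_mul_block_iff hc (by omega) hab hbn).1 hle
    obtain rfl : b = n - 1 := by omega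
    exact ⟨a, hca, by omega, rfl⟩
  · rintro ⟨m, hcm, hm, rfl⟩
    exact (wle_block_mul_block_iff hc (by omega) (by omega) (by omega)).2 ⟨hcm, le_rfl⟩

/-- Let `n ≥ 4` and
`τ_2 = (s_{⌈(n−1)/2⌉} ⋯ s_1) · (s_{n−1} ⋯ s_2) ∈ W^{I_2}`.  Then for `w ∈ W^{I_2}`:
`τ_2 ≤ w` if and only if `w = (s_m ⋯ s_1) · (s_{n−1} ⋯ s_2)` for some
`⌈(n−1)/2⌉ ≤ m ≤ n−2`. -/
theorem stmt19 (n : ℕ) (hn : 4 ≤ n)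
    (mc : ℕ) (hmc : (mc : ℤ) = ⌈((n : ℚ) - 1) / 2⌉)
    (τ2 : Equiv.Perm (Fin n)) (hτ2 : τ2 = block n 1 mc * block n 2 (n - 1))
    (hτI : τ2 ∈ WIr n 2)
    (w : Equiv.Perm (Fin n)) (hw : w ∈ WIr n 2) :
    wle n τ2 w ↔
      ∃ m : ℕ, mc ≤ m ∧ m ≤ n - 2 ∧ w = block n 1 m * block n 2 (n - 1) := by
  subst hτ2
  exact stmt19_general (by have := ceil_sub_one_div_two_lt (show 3 ≤ n by omega); omega) hw

end SnPaper
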